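/- Feasibility under "box ∩ polyhedral" uncertainty, Case II (sufficiency direction of Theorem 4.5, Case II): let δ_B, δ_P > 0 with δ_P ≤ n δ_B. If there exists λ ≥ 0 such that A − λ B⁽ᴾ⁾ is positive semidefinite, then for all ζ ∈ ℝⁿ with ‖ζ‖_∞ ≤ δ_B and ‖ζ‖₁ ≤ δ_P one has ((δ_P μ⁽⁰⁾ + Σ_{j=1}^n ζⱼ μ⁽ʲ⁾)ᵀ x)² ≥ τ² δ_P². -/

import Mathlib

open Matrix

noncomputable section

/-- `a j = (μ⁽ʲ⁾)ᵀ x`, the dot product of the `j`-th expected-return vector with `x`. -/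
def avec (n : ℕ) (x : Fin n → ℝ) (μ : Fin (n + 1) → Fin n → ℝ) : Fin (n + 1) → ℝ :=
  fun j => μ j ⬝ᵥ x

/-- The symmetric matrix `A = a aᵀ - τ² e₀ e₀ᵀ`. -/
def Amat (n : ℕ) (x : Fin n → ℝ) (τ : ℝ) (μ : Fin (n + 1) → Fin n → ℝ) :
    Matrix (Fin (n + 1)) (Fin (n + 1)) ℝ :=
  Matrix.of fun i j =>
    avec n x μ i * avec n x μ j - if i = 0 ∧ j = 0 then τ ^ 2 else 0

/-- The matrix `B⁽ᴱ⁾ = diag(1, -1, …, -1)`. -/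
def BE (n : ℕ) : Matrix (Fin (n + 1)) (Fin (n + 1)) ℝ :=
  Matrix.diagonal fun i => if i = 0 then 1 else -1

/-- The matrix `B⁽ᴾ⁾ = e₀e₀ᵀ - J`: `(0,0)`-entry `1`, entries `-1` for `i, j ≥ 1`,
zero elsewhere. -/
def BP (n : ℕ) : Matrix (Fin (n + 1)) (Fin (n + 1)) ℝ :=
  Matrix.of fun i j =>
    if i = 0 ∧ j = 0 then 1 else if i ≠ 0 ∧ j ≠ 0 then -1 else 0

/-- A real matrix is positive semidefinite: `zᵀ M z ≥ 0` for all `z`. -/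
def IsPSD {d : ℕ} (M : Matrix (Fin d) (Fin d) ℝ) : Prop :=
  ∀ z : Fin d → ℝ, 0 ≤ z ⬝ᵥ M *ᵥ z

/-!
For `z = (δP, ζ)` the two quadratic forms are `zᵀ A z = (aᵀ z)² - τ² δP²` and
`zᵀ B⁽ᴾ⁾ z = δP² - (∑ ζⱼ)²`. The second is nonnegative whenever `|∑ ζⱼ| ≤ δP`, and then
`A - λ B⁽ᴾ⁾ ⪰ 0` with `λ ≥ 0` makes the first nonnegative too (the easy half of the S-lemma).
-/

theorem dotProduct_vecMulVec_mulVec {m n R : Type*} [Fintype m] [Fintype n] [NonUnitalSemiring R]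
    (z u : m → R) (v w : n → R) :
    z ⬝ᵥ vecMulVec u v *ᵥ w = (z ⬝ᵥ u) * (v ⬝ᵥ w) := by
  rw [dotProduct_mulVec, vecMul_vecMulVec, smul_dotProduct, smul_eq_mul]

theorem dotProduct_single_mulVec {m n R : Type*} [Fintype m] [Fintype n] [DecidableEq m]
    [DecidableEq n] [NonUnitalSemiring R] (z : m → R) (i : m) (j : n) (c : R) (w : n → R) :
    z ⬝ᵥ single i j c *ᵥ w = z i * c * w j := by
  rw [single_mulVec, ← Pi.single, dotProduct_single, mul_assoc]

theorem IsPSD.dotProduct_mulVec_nonneg_of_sub_smul {d : ℕ} {M B : Matrix (Fin d) (Fin d) ℝ}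
    {lam : ℝ} (hMB : IsPSD (M - lam • B)) (hlam : 0 ≤ lam) {z : Fin d → ℝ}
    (hz : 0 ≤ z ⬝ᵥ B *ᵥ z) : 0 ≤ z ⬝ᵥ M *ᵥ z := by
  have hdiff : 0 ≤ z ⬝ᵥ M *ᵥ z - lam * (z ⬝ᵥ B *ᵥ z) := by
    simpa only [sub_mulVec, smul_mulVec, dotProduct_sub, dotProduct_smul, smul_eq_mul]
      using hMB z
  exact (mul_nonneg hlam hz).trans (sub_nonneg.mp hdiff)

section

variable (n : ℕ) (x : Fin n → ℝ) (τ : ℝ) (μ : Fin (n + 1) → Fin n → ℝ)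

theorem dotProduct_avec (z : Fin (n + 1) → ℝ) :
    z ⬝ᵥ avec n x μ = (∑ j, z j • μ j) ⬝ᵥ x := by
  simp only [sum_dotProduct, smul_dotProduct, smul_eq_mul]
  rfl

theorem Amat_eq_vecMulVec_sub_single :
    Amat n x τ μ = vecMulVec (avec n x μ) (avec n x μ) - single 0 0 (τ ^ 2) := by
  ext i j
  simp [Amat, vecMulVec_apply, single_apply, eq_comm]

theorem BP_eq_single_sub_vecMulVec :
    BP n = single 0 0 1 - vecMulVec (Fin.cons 0 1) (Fin.cons 0 1) := by
  ext i j
  cases i using Fin.cases <;> cases j using Fin.cases <;>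
    simp [BP, vecMulVec_apply, Fin.succ_ne_zero, (Fin.succ_ne_zero _).symm]

theorem dotProduct_Amat_mulVec (z : Fin (n + 1) → ℝ) :
    z ⬝ᵥ Amat n x τ μ *ᵥ z = (z ⬝ᵥ avec n x μ) ^ 2 - τ ^ 2 * z 0 ^ 2 := by
  rw [Amat_eq_vecMulVec_sub_single, sub_mulVec, dotProduct_sub, dotProduct_vecMulVec_mulVec,
    dotProduct_single_mulVec, dotProduct_comm (avec n x μ) z]
  ring

theorem dotProduct_BP_mulVec (z : Fin (n + 1) → ℝ) :
    z ⬝ᵥ BP n *ᵥ z = z 0 ^ 2 - (∑ j : Fin n, z j.succ) ^ 2 := by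
  have hsum : z ⬝ᵥ Fin.cons 0 1 = ∑ j : Fin n, z j.succ := by
    simp [dotProduct, Fin.sum_univ_succ]
  rw [BP_eq_single_sub_vecMulVec, sub_mulVec, dotProduct_sub, dotProduct_vecMulVec_mulVec,
    dotProduct_single_mulVec, dotProduct_comm _ z, hsum]
  ring

end

theorem feasibility_box_polyhedral_caseII_general (n : ℕ) (x : Fin n → ℝ) (τ : ℝ)
    (μ : Fin (n + 1) → Fin n → ℝ) (δP : ℝ)
    (h : ∃ lam : ℝ, 0 ≤ lam ∧ IsPSD (Amat n x τ μ - lam • BP n))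
    (ζ : Fin n → ℝ) (hζ : |∑ j, ζ j| ≤ δP) :
    τ ^ 2 * δP ^ 2 ≤ ((δP • μ 0 + ∑ j : Fin n, ζ j • μ j.succ) ⬝ᵥ x) ^ 2 := by
  obtain ⟨lam, hlam, hpsd⟩ := h
  let z : Fin (n + 1) → ℝ := Fin.cons δP ζ
  have hB : 0 ≤ z ⬝ᵥ BP n *ᵥ z := by
    rw [dotProduct_BP_mulVec, sub_nonneg]
    exact sq_le_sq.mpr (hζ.trans (le_abs_self δP))
  have hA : 0 ≤ z ⬝ᵥ Amat n x τ μ *ᵥ z := hpsd.dotProduct_mulVec_nonneg_of_sub_smul hlam hB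
  simpa only [dotProduct_Amat_mulVec, dotProduct_avec, Fin.sum_univ_succ, sub_nonneg, z,
    Fin.cons_zero, Fin.cons_succ] using hA

/-- **Theorem 4.5, Case II**, sufficiency direction ("box ∩ polyhedral" uncertainty with
`δ_P ≤ n δ_B`): if `A - λ B⁽ᴾ⁾ ⪰ 0` for some `λ ≥ 0`, then the robust constraint holds
on the intersection of the box and the polyhedron. -/
theorem feasibility_box_polyhedral_caseII (n : ℕ) (hn : 1 ≤ n) (x : Fin n → ℝ) (τ : ℝ)
    (μ : Fin (n + 1) → Fin n → ℝ) (δB δP : ℝ) (hδB : 0 < δB) (hδP : 0 < δP)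
    (hmin : δP ≤ (n : ℝ) * δB)
    (h : ∃ lam : ℝ, 0 ≤ lam ∧ IsPSD (Amat n x τ μ - lam • BP n)) :
    ∀ ζ : Fin n → ℝ, (∀ j, |ζ j| ≤ δB) → (∑ j, |ζ j|) ≤ δP →
      τ ^ 2 * δP ^ 2 ≤ ((δP • μ 0 + ∑ j : Fin n, ζ j • μ j.succ) ⬝ᵥ x) ^ 2 := by
  intro ζ _ hζ
  exact feasibility_box_polyhedral_caseII_general n x τ μ δP h ζ
    ((Finset.abs_sum_le_sum_abs ζ Finset.univ).trans hζ)
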